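/- Let y₀ ∈ ℝ and let φ : ℝ → ℝ be integrable on (-τ, 0). Define y : (-τ, ∞) → ℝ by y(t) = φ(t) for t ∈ (-τ, 0) and y(t) = Φ(t) · y₀ + a · ∫_{-τ}^{min(t-τ, 0)} Φ(t - τ - γ) · φ(γ) dγ for t ≥ 0. Then y restricted to [0, ∞) is continuous, y(0) = y₀, and y satisfies the mild (integral) form of the delay equation: y(t) = e^{-λ t} · y₀ + a · ∫₀^t e^{-λ(t-s)} · y(s - τ) ds for every t ≥ 0. -/

import Mathlib

/-!
The kernel `Φ = delayFlow a lam τ` is a locally finite sum `∑ g_j` of shifted terms `g_j`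
(`delayTerm`), with `g_j` supported on `[jτ, ∞)`. Integrating a power gives
`a ∫ e^{-λ(r-s)} g_j(s-τ) ds = g_{j+1}(r)` (`delayTerm_succ`), so `Φ` itself solves the mild
delay equation `a ∫ e^{-λ(r-s)} Φ(s-τ) ds = Φ(r) - g_0(r)` (`delayFlow_renewal`).

Extending the history by zero to an integrable function `ψ` on `ℝ`, one has, for every `s > 0`,
`y(s-τ) = ψ(s-τ) + Φ(s-τ) y₀ + a ∫ Φ(s-2τ-γ) ψ(γ) dγ`. Inserting this into the right-hand side
of the mild equation and exchanging the integrals (Fubini, `integrable_fubini`) turns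
the last summand into `∫ (Φ - g_0)(t-τ-γ) ψ(γ) dγ` by the equation for `Φ`; its `g_0` part cancels
the contribution of `ψ(s-τ)`. Continuity and the initial value are read off from the mild form.
-/

open MeasureTheory intervalIntegral

/-- Single-spectral-mode flow of the delayed heat equation:
`Φ(t) = e^{-λt} + ∑_{j≥1} (a^j/j!) (max(t-jτ,0))^j e^{-λ max(t-jτ,0)}` for `t ≥ 0`,
and `Φ(t) = 0` for `t < 0`. -/
noncomputable def delayFlow (a lam τ : ℝ) (t : ℝ) : ℝ :=
  if t < 0 then 0
  else Real.exp (-(lam * t)) +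
    ∑' k : ℕ,
      (a ^ (k + 1) / (Nat.factorial (k + 1))) * (max (t - (k + 1) * τ) 0) ^ (k + 1)
        * Real.exp (-(lam * max (t - (k + 1) * τ) 0))

/-- The `j`-th summand of the flow, cut off to vanish on `(-∞, jτ)`. The case `j = 0` is
`e^{-λt}` on `[0, ∞)`, extended by zero. -/
noncomputable def delayTerm (a lam τ : ℝ) (j : ℕ) (t : ℝ) : ℝ :=
  if t < j * τ then 0
  else a ^ j / (Nat.factorial j) * (t - j * τ) ^ j * Real.exp (-(lam * (t - j * τ)))

lemma delayFlow_of_neg (a lam τ : ℝ) {t : ℝ} (ht : t < 0) : delayFlow a lam τ t = 0 := by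
  simp [delayFlow, ht]

/-- Below `Nτ` the series for the flow has at most `N` nonzero terms. -/
lemma delayFlow_eq_sum (a lam τ : ℝ) (hτ : 0 < τ) (N : ℕ) (t : ℝ) (ht : t < N * τ) :
    delayFlow a lam τ t = ∑ j ∈ Finset.range N, delayTerm a lam τ j t := by
  by_cases h0 : t < 0
  · rw [delayFlow_of_neg _ _ _ h0, Finset.sum_eq_zero]
    intro j _
    have : t < j * τ := h0.trans_le (by positivity)
    simp [delayTerm, this]
  · obtain _ | N := N
    · simp at ht; exact absurd ht h0
    have key : ∀ k : ℕ, (a ^ (k + 1) / (Nat.factorial (k + 1))) *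
        (max (t - (k + 1) * τ) 0) ^ (k + 1) * Real.exp (-(lam * max (t - (k + 1) * τ) 0))
        = delayTerm a lam τ (k + 1) t := by
      intro k
      unfold delayTerm
      push_cast
      split_ifs with h
      · rw [max_eq_right (by linarith)]; simp
      · rw [max_eq_left (by linarith)]
    rw [delayFlow, if_neg h0, Finset.sum_range_succ', add_comm]
    simp_rw [key]
    congr 1
    · apply tsum_eq_sum
      intro k hk
      have hk' : N ≤ k := by simpa using hk
      have h1 : t < ((k + 1 : ℕ) : ℝ) * τ := by
        refine ht.trans_le ?_
        gcongr
      rw [delayTerm, if_pos h1]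
    · simp [delayTerm, h0]

lemma measurable_delayTerm (a lam τ : ℝ) (j : ℕ) : Measurable (delayTerm a lam τ j) := by
  unfold delayTerm
  refine Measurable.ite measurableSet_Iio measurable_const ?_
  fun_prop

lemma exists_bound_delayTerm (a lam τ : ℝ) (j : ℕ) (T : ℝ) :
    ∃ C, 0 ≤ C ∧ ∀ t ≤ T, ‖delayTerm a lam τ j t‖ ≤ C := by
  have hc : Continuous fun t : ℝ =>
      a ^ j / (Nat.factorial j) * (t - j * τ) ^ j * Real.exp (-(lam * (t - j * τ))) := by
    fun_prop
  obtain ⟨C, hC⟩ := (isCompact_Icc (a := j * τ) (b := T)).exists_bound_of_continuousOn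
    hc.continuousOn
  refine ⟨max C 0, le_max_right _ _, fun t ht => ?_⟩
  unfold delayTerm
  split_ifs with h
  · simp
  · exact (hC t ⟨not_lt.1 h, ht⟩).trans (le_max_left _ _)

lemma exists_nat_lt_mul (τ : ℝ) (hτ : 0 < τ) (t : ℝ) : ∃ N : ℕ, t < N * τ := by
  obtain ⟨N, hN⟩ := exists_nat_gt (t / τ)
  exact ⟨N, (div_lt_iff₀ hτ).1 hN⟩

lemma exists_bound_delayFlow (a lam τ : ℝ) (hτ : 0 < τ) (T : ℝ) :
    ∃ C, 0 ≤ C ∧ ∀ t ≤ T, ‖delayFlow a lam τ t‖ ≤ C := by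
  obtain ⟨N, hN⟩ := exists_nat_lt_mul τ hτ T
  choose C hC0 hC using fun j => exists_bound_delayTerm a lam τ j T
  refine ⟨∑ j ∈ Finset.range N, C j, Finset.sum_nonneg fun j _ => hC0 j, fun t ht => ?_⟩
  rw [delayFlow_eq_sum a lam τ hτ N t (ht.trans_lt hN)]
  exact (norm_sum_le _ _).trans (Finset.sum_le_sum fun j _ => hC j t ht)

lemma measurable_delayFlow (a lam τ : ℝ) (hτ : 0 < τ) : Measurable (delayFlow a lam τ) := by
  refine measurable_of_tendsto_metrizable
    (f := fun N : ℕ => fun t => ∑ j ∈ Finset.range N, delayTerm a lam τ j t)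
    (fun N => Finset.measurable_sum _ fun j _ => measurable_delayTerm a lam τ j) ?_
  rw [tendsto_pi_nhds]
  intro t
  obtain ⟨N, hN⟩ := exists_nat_lt_mul τ hτ t
  refine tendsto_const_nhds.congr' ?_
  filter_upwards [Filter.eventually_ge_atTop N] with M hM
  refine delayFlow_eq_sum a lam τ hτ M t (hN.trans_le ?_)
  gcongr

/-- A measurable function bounded on left half-lines is integrable on bounded intervals, also
after a shift and multiplication by the exponential kernel. -/
lemma intervalIntegrable_kernel (lam : ℝ) {f : ℝ → ℝ} (hf : Measurable f)
    (hb : ∀ T, ∃ C, 0 ≤ C ∧ ∀ t ≤ T, ‖f t‖ ≤ C) (d r b c : ℝ) :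
    IntervalIntegrable (fun s => Real.exp (-(lam * (r - s))) * f (s - d)) volume b c := by
  obtain ⟨C, -, hC⟩ := hb (max b c - d)
  have h1 : IntervalIntegrable (fun s => f (s - d)) volume b c := by
    refine (intervalIntegrable_const (c := C)).mono_fun
      (hf.comp (by fun_prop)).aestronglyMeasurable ?_
    refine (ae_restrict_iff' measurableSet_uIoc).2 (Filter.Eventually.of_forall fun s hs => ?_)
    have h2 : s ≤ max b c := hs.2
    exact (hC _ (by linarith)).trans (le_abs_self C)
  exact h1.continuousOn_mul (by fun_prop)

/-- One step of the recursion. The lower limit is immaterial as long as it lies to the left of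
the support of the integrand. -/
lemma delayTerm_succ (a lam τ : ℝ) (hτ : 0 < τ) (j : ℕ) (c r : ℝ) (hc : c ≤ 0) :
    a * ∫ s in c..r, Real.exp (-(lam * (r - s))) * delayTerm a lam τ j (s - τ)
      = delayTerm a lam τ (j + 1) r := by
  set q : ℝ := ((j + 1 : ℕ) : ℝ) * τ with hq
  have hq' : q = j * τ + τ := by rw [hq]; push_cast; ring
  have hq0 : 0 < q := by positivity
  have zero : ∀ x : ℝ, x ≤ q →
      ∫ s in c..x, Real.exp (-(lam * (r - s))) * delayTerm a lam τ j (s - τ) = 0 := by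
    intro x hx
    apply intervalIntegral.integral_zero_ae
    have hne : ∀ᵐ s : ℝ, s ≠ q := by simp [ae_iff, measure_singleton]
    filter_upwards [hne] with s hs hs'
    have h1 : s ≤ max c x := hs'.2
    have h2 : s < q := lt_of_le_of_ne (h1.trans (max_le (hc.trans hq0.le) hx)) hs
    rw [delayTerm, if_pos (by linarith), mul_zero]
  by_cases hr : r < q
  · rw [zero r hr.le, delayTerm, if_pos hr, mul_zero]
  · have hr' : q ≤ r := not_lt.1 hr
    have hint := fun b e => intervalIntegrable_kernel lam (measurable_delayTerm a lam τ j)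
      (exists_bound_delayTerm a lam τ j) τ r b e
    rw [← intervalIntegral.integral_add_adjacent_intervals (hint c q) (hint q r), zero q le_rfl,
      zero_add, delayTerm, if_neg hr]
    have : ∫ s in q..r, Real.exp (-(lam * (r - s))) * delayTerm a lam τ j (s - τ)
        = ∫ s in q..r, (a ^ j / (Nat.factorial j) * Real.exp (-(lam * (r - q)))) * (s - q) ^ j := by
      apply intervalIntegral.integral_congr
      intro s hs
      rw [Set.uIcc_of_le hr'] at hs
      have h1 : q ≤ s := hs.1
      have h3 : s - τ - j * τ = s - q := by rw [hq']; ring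
      have h4 : -(lam * (r - q)) = -(lam * (r - s)) + -(lam * (s - q)) := by ring
      simp only [delayTerm]
      rw [if_neg (by linarith), h3, h4, Real.exp_add]
      ring
    rw [this, intervalIntegral.integral_const_mul,
      intervalIntegral.integral_comp_sub_right (fun x => x ^ j) q, sub_self, integral_pow,
      Nat.factorial_succ, ← hq]
    have : (Nat.factorial j : ℝ) ≠ 0 := by positivity
    push_cast
    field_simp
    ring

/-- The flow solves the mild delay equation with initial value `1` and zero history.
For `r < 0` both sides vanish. -/
lemma delayFlow_renewal (a lam τ : ℝ) (hτ : 0 < τ) (c r : ℝ) (hc : c ≤ 0) :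
    a * ∫ s in c..r, Real.exp (-(lam * (r - s))) * delayFlow a lam τ (s - τ)
      = delayFlow a lam τ r - delayTerm a lam τ 0 r := by
  obtain ⟨N, hN⟩ := exists_nat_lt_mul τ hτ r
  have hN1 : r < ((N + 1 : ℕ) : ℝ) * τ := by push_cast; linarith
  have h1 : ∫ s in c..r, Real.exp (-(lam * (r - s))) * delayFlow a lam τ (s - τ)
      = ∫ s in c..r, ∑ j ∈ Finset.range N,
          Real.exp (-(lam * (r - s))) * delayTerm a lam τ j (s - τ) := by
    apply intervalIntegral.integral_congr
    intro s hs
    have h2 : s ≤ max c r := hs.2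
    have h4 : (0 : ℝ) ≤ N * τ := by positivity
    have h3 : s ≤ N * τ := h2.trans (max_le (by linarith) hN.le)
    simp only
    rw [delayFlow_eq_sum a lam τ hτ N (s - τ) (by linarith), Finset.mul_sum]
  rw [h1, intervalIntegral.integral_finsetSum fun j _ => intervalIntegrable_kernel lam
      (measurable_delayTerm a lam τ j) (exists_bound_delayTerm a lam τ j) τ r c r,
    Finset.mul_sum, delayFlow_eq_sum a lam τ hτ (N + 1) r hN1, Finset.sum_range_succ',
    add_sub_cancel_right]
  exact Finset.sum_congr rfl fun j _ => delayTerm_succ a lam τ hτ j c r hc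

/-- The hypothesis of Fubini's theorem for the memory term. Although `delayFlow` need not be
bounded, its argument stays below `t` where `ψ` does not vanish. -/
lemma integrable_fubini (a lam τ : ℝ) (hτ : 0 < τ) (ψ : ℝ → ℝ) (hψ : Integrable ψ)
    (hsupp : ∀ γ, γ ≤ -τ → ψ γ = 0) (t : ℝ) :
    Integrable (fun p : ℝ × ℝ => Real.exp (-(lam * (t - p.1))) *
        (delayFlow a lam τ (p.1 - τ - τ - p.2) * ψ p.2))
      ((volume.restrict (Set.Ioc 0 t)).prod volume) := by
  obtain ⟨C, hC0, hC⟩ := exists_bound_delayFlow a lam τ hτ t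
  have hdom : Integrable (fun p : ℝ × ℝ => (Real.exp (|lam| * t) * C) * ‖ψ p.2‖)
      ((volume.restrict (Set.Ioc 0 t)).prod volume) :=
    (hψ.norm.comp_snd _).const_mul _
  refine hdom.mono' ?_ ?_
  · have h1 : Measurable fun p : ℝ × ℝ => delayFlow a lam τ (p.1 - τ - τ - p.2) :=
      (measurable_delayFlow a lam τ hτ).comp (by fun_prop)
    have h2 : Measurable fun p : ℝ × ℝ => Real.exp (-(lam * (t - p.1))) := by fun_prop
    exact h2.aestronglyMeasurable.mul
      (h1.aestronglyMeasurable.mul hψ.aestronglyMeasurable.comp_snd)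
  · have hr : (volume.restrict (Set.Ioc 0 t)).prod (volume : Measure ℝ)
        = ((volume : Measure ℝ).prod (volume : Measure ℝ)).restrict (Set.Ioc 0 t ×ˢ Set.univ) := by
      rw [← Measure.prod_restrict, Measure.restrict_univ]
    rw [hr, ae_restrict_iff' (measurableSet_Ioc.prod MeasurableSet.univ)]
    refine Filter.Eventually.of_forall fun p hp => ?_
    obtain ⟨⟨hp1, hp2⟩, -⟩ := hp
    by_cases hγ : p.2 ≤ -τ
    · simp [hsupp _ hγ]
    · rw [norm_mul, norm_mul, ← mul_assoc]
      gcongr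
      · rw [Real.norm_of_nonneg (Real.exp_pos _).le]
        apply Real.exp_le_exp.2
        have h1 : -(lam * (t - p.1)) ≤ |lam| * (t - p.1) := by
          nlinarith [neg_abs_le lam]
        nlinarith [abs_nonneg lam]
      · exact hC _ (by linarith)

/-- The mild equation, for a function given on `(-τ, ∞)` through the zero-extended history `ψ`. -/
lemma mild_of_representation (a lam τ : ℝ) (hτ : 0 < τ) (y₀ : ℝ) (ψ : ℝ → ℝ) (hψ : Integrable ψ)
    (hsupp : ∀ γ, γ ≤ -τ → ψ γ = 0) (y : ℝ → ℝ)
    (hy : ∀ s, 0 < s → y (s - τ) = ψ (s - τ) + delayFlow a lam τ (s - τ) * y₀ +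
      a * ∫ γ, delayFlow a lam τ (s - τ - τ - γ) * ψ γ)
    (t : ℝ) (ht : 0 ≤ t) :
    IntervalIntegrable (fun s => Real.exp (-(lam * (t - s))) * y (s - τ)) volume 0 t ∧
    delayFlow a lam τ t * y₀ + a * ∫ γ, delayFlow a lam τ (t - τ - γ) * ψ γ
      = Real.exp (-(lam * t)) * y₀ +
        a * ∫ s in (0:ℝ)..t, Real.exp (-(lam * (t - s))) * y (s - τ) := by
  have hF := integrable_fubini a lam τ hτ ψ hψ hsupp t
  have i1 : IntervalIntegrable (fun s => Real.exp (-(lam * (t - s))) * ψ (s - τ)) volume 0 t :=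
    (hψ.comp_sub_right τ).intervalIntegrable.continuousOn_mul (by fun_prop)
  have i2 : IntervalIntegrable
      (fun s => Real.exp (-(lam * (t - s))) * delayFlow a lam τ (s - τ)) volume 0 t :=
    intervalIntegrable_kernel lam (measurable_delayFlow a lam τ hτ)
      (exists_bound_delayFlow a lam τ hτ) τ t 0 t
  have i3 : IntervalIntegrable (fun s => Real.exp (-(lam * (t - s))) *
      ∫ γ, delayFlow a lam τ (s - τ - τ - γ) * ψ γ) volume 0 t := by
    rw [intervalIntegrable_iff_integrableOn_Ioc_of_le ht]
    have := hF.integral_prod_left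
    simp only [MeasureTheory.integral_const_mul] at this
    exact this
  have hcongr : ∀ s ∈ Set.uIoc 0 t, Real.exp (-(lam * (t - s))) * y (s - τ)
      = Real.exp (-(lam * (t - s))) * ψ (s - τ) +
        (Real.exp (-(lam * (t - s))) * delayFlow a lam τ (s - τ)) * y₀ +
        a * (Real.exp (-(lam * (t - s))) *
          ∫ γ, delayFlow a lam τ (s - τ - τ - γ) * ψ γ) := by
    intro s hs
    rw [Set.uIoc_of_le ht] at hs
    rw [hy s hs.1]
    ring
  have i12 := i1.add (i2.mul_const y₀)
  have i123 := i12.add (i3.const_mul a)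
  refine ⟨i123.congr fun s hs => (hcongr s hs).symm, ?_⟩
  have hsplit : ∫ s in (0:ℝ)..t, Real.exp (-(lam * (t - s))) * y (s - τ)
      = (∫ s in (0:ℝ)..t, Real.exp (-(lam * (t - s))) * ψ (s - τ)) +
        (∫ s in (0:ℝ)..t, Real.exp (-(lam * (t - s))) * delayFlow a lam τ (s - τ)) * y₀ +
        a * ∫ s in (0:ℝ)..t, Real.exp (-(lam * (t - s))) *
          ∫ γ, delayFlow a lam τ (s - τ - τ - γ) * ψ γ := by
    rw [intervalIntegral.integral_congr_ae (Filter.Eventually.of_forall hcongr),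
      intervalIntegral.integral_add i12 (i3.const_mul a),
      intervalIntegral.integral_add i1 (i2.mul_const y₀),
      intervalIntegral.integral_mul_const, intervalIntegral.integral_const_mul]
  have hren := delayFlow_renewal a lam τ hτ 0 t le_rfl
  have hg0 : delayTerm a lam τ 0 t = Real.exp (-(lam * t)) := by
    simp [delayTerm, not_lt.2 ht]
  rw [hg0] at hren
  -- the memory term after exchanging the order of integration
  have hswap : a * ∫ s in (0:ℝ)..t, Real.exp (-(lam * (t - s))) *
        ∫ γ, delayFlow a lam τ (s - τ - τ - γ) * ψ γ
      = ∫ γ, (delayFlow a lam τ (t - τ - γ) * ψ γ - delayTerm a lam τ 0 (t - τ - γ) * ψ γ) := by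
    rw [intervalIntegral.integral_of_le ht]
    simp_rw [← MeasureTheory.integral_const_mul (μ := (volume : Measure ℝ)) (Real.exp _)]
    rw [MeasureTheory.integral_integral_swap hF, ← MeasureTheory.integral_const_mul]
    congr 1
    funext γ
    by_cases hγ : γ ≤ -τ
    · simp [hsupp γ hγ]
    · have h1 := delayFlow_renewal a lam τ hτ (0 - (τ + γ)) (t - (τ + γ)) (by linarith)
      rw [← intervalIntegral.integral_comp_sub_right (fun u =>
        Real.exp (-(lam * (t - (τ + γ) - u))) * delayFlow a lam τ (u - τ)) (τ + γ)] at h1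
      have e1 : t - τ - γ = t - (τ + γ) := by ring
      rw [e1, ← sub_mul, ← h1, intervalIntegral.integral_of_le ht, mul_assoc,
        ← MeasureTheory.integral_mul_const]
      congr 2
      funext s
      have e2 : t - (τ + γ) - (s - (τ + γ)) = t - s := by ring
      have e3 : s - (τ + γ) - τ = s - τ - τ - γ := by ring
      rw [e2, e3]
      ring
  have bint : ∀ f : ℝ → ℝ, Measurable f → (∀ T, ∃ C, 0 ≤ C ∧ ∀ x ≤ T, ‖f x‖ ≤ C) →
      Integrable fun γ => f (t - τ - γ) * ψ γ := by
    intro f hf hb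
    obtain ⟨C, -, hC⟩ := hb t
    refine (hψ.norm.const_mul C).mono'
      ((hf.comp (by fun_prop)).aestronglyMeasurable.mul hψ.aestronglyMeasurable) ?_
    refine Filter.Eventually.of_forall fun γ => ?_
    by_cases hγ : γ ≤ -τ
    · simp [hsupp γ hγ]
    · rw [norm_mul]
      gcongr
      exact hC _ (by linarith)
  rw [MeasureTheory.integral_sub
    (bint _ (measurable_delayFlow a lam τ hτ) (exists_bound_delayFlow a lam τ hτ))
    (bint _ (measurable_delayTerm a lam τ 0) (exists_bound_delayTerm a lam τ 0))] at hswap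
  have hhist : ∫ γ, delayTerm a lam τ 0 (t - τ - γ) * ψ γ
      = ∫ s in (0:ℝ)..t, Real.exp (-(lam * (t - s))) * ψ (s - τ) := by
    rw [← MeasureTheory.integral_sub_right_eq_self
        (fun γ => delayTerm a lam τ 0 (t - τ - γ) * ψ γ) τ,
      intervalIntegral.integral_of_le ht, ← MeasureTheory.integral_indicator measurableSet_Ioc]
    congr 1
    funext s
    have e1 : t - τ - (s - τ) = t - s := by ring
    rw [e1]
    by_cases h0 : s ≤ 0
    · have h2 : s ∉ Set.Ioc 0 t := fun h => absurd h.1 (not_lt.2 h0)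
      rw [Set.indicator_of_notMem h2, hsupp _ (by linarith), mul_zero]
    · by_cases h1 : s ≤ t
      · have h2 : s ∈ Set.Ioc 0 t := ⟨not_le.1 h0, h1⟩
        rw [Set.indicator_of_mem h2]
        simp [delayTerm, h1]
      · have h2 : s ∉ Set.Ioc 0 t := fun h => h1 h.2
        rw [Set.indicator_of_notMem h2, delayTerm, if_pos (by simp; linarith), zero_mul]
  rw [hsplit, hswap, hhist]
  linear_combination (-y₀) * hren

/-- Single-mode version of the representation theorem (Theorem 4.1 of the paper):
if `y(t) = φ(t)` on `(-τ,0)` and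
`y(t) = Φ(t) y₀ + a ∫_{-τ}^{min(t-τ,0)} Φ(t-τ-γ) φ(γ) dγ` for `t ≥ 0`,
then `y` is continuous on `[0,∞)`, `y(0) = y₀`, and `y` solves the mild delay equation
`y(t) = e^{-λt} y₀ + a ∫₀^t e^{-λ(t-s)} y(s-τ) ds`. -/
theorem stmt_11 (a lam τ : ℝ) (hτ : 0 < τ) (y₀ : ℝ) (φ : ℝ → ℝ)
    (hφ : IntegrableOn φ (Set.Ioo (-τ) 0))
    (y : ℝ → ℝ)
    (hneg : ∀ t ∈ Set.Ioo (-τ) (0:ℝ), y t = φ t)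
    (hpos : ∀ t : ℝ, 0 ≤ t →
      y t = delayFlow a lam τ t * y₀ +
        a * ∫ γ in (-τ)..(min (t - τ) 0), delayFlow a lam τ (t - τ - γ) * φ γ) :
    ContinuousOn y (Set.Ici 0) ∧
    y 0 = y₀ ∧
    (∀ t : ℝ, 0 ≤ t →
      y t = Real.exp (-(lam * t)) * y₀ +
        a * ∫ s in (0:ℝ)..t, Real.exp (-(lam * (t - s))) * y (s - τ)) := by
  -- the history, extended by zero
  set ψ : ℝ → ℝ := (Set.Ioo (-τ) 0).indicator φ with hψdef
  have hψ : Integrable ψ := (integrable_indicator_iff measurableSet_Ioo).2 hφ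
  have hsupp : ∀ γ, γ ≤ -τ → ψ γ = 0 := fun γ hγ =>
    Set.indicator_of_notMem (fun h => absurd h.1 (not_lt.2 hγ)) _
  have hpos' : ∀ t : ℝ, 0 ≤ t → y t = delayFlow a lam τ t * y₀ +
      a * ∫ γ, delayFlow a lam τ (t - τ - γ) * ψ γ := by
    intro t ht
    rw [hpos t ht, intervalIntegral.integral_of_le (le_min (by linarith) (by linarith))]
    congr 2
    have h1 : ∫ γ in Set.Ioo (-τ) 0, delayFlow a lam τ (t - τ - γ) * φ γ
        = ∫ γ, delayFlow a lam τ (t - τ - γ) * ψ γ := by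
      rw [← MeasureTheory.integral_indicator measurableSet_Ioo]
      congr 1
      funext γ
      by_cases h : γ ∈ Set.Ioo (-τ) 0 <;> simp only [hψdef, Set.indicator, h, if_true, if_false,
        mul_zero]
    rw [← h1, ← integral_Ioc_eq_integral_Ioo]
    -- the flow vanishes at negative times, so integrating beyond `t - τ` changes nothing
    refine (setIntegral_eq_of_subset_of_forall_sdiff_eq_zero measurableSet_Ioc
      (Set.Ioc_subset_Ioc_right (min_le_right _ _)) ?_).symm
    rintro γ ⟨⟨h2, h3⟩, h4⟩
    have h5 : t - τ < γ := by
      by_contra! h6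
      exact h4 ⟨h2, le_min h6 h3⟩
    rw [delayFlow_of_neg _ _ _ (by linarith), zero_mul]
  have hy : ∀ s, 0 < s → y (s - τ) = ψ (s - τ) + delayFlow a lam τ (s - τ) * y₀ +
      a * ∫ γ, delayFlow a lam τ (s - τ - τ - γ) * ψ γ := by
    intro s hs
    by_cases h : s < τ
    · have hmem : s - τ ∈ Set.Ioo (-τ) 0 := ⟨by linarith, by linarith⟩
      have hz : ∀ γ, delayFlow a lam τ (s - τ - τ - γ) * ψ γ = 0 := by
        intro γ
        by_cases hγ : γ ≤ -τ
        · rw [hsupp γ hγ, mul_zero]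
        · rw [delayFlow_of_neg _ _ _ (by linarith), zero_mul]
      rw [hneg _ hmem, delayFlow_of_neg a lam τ (by linarith : s - τ < 0)]
      simp only [hz, MeasureTheory.integral_zero]
      rw [hψdef, Set.indicator_of_mem hmem]
      ring
    · have hmem : s - τ ∉ Set.Ioo (-τ) 0 := fun h' => by linarith [h'.2]
      rw [hpos' (s - τ) (by linarith), hψdef, Set.indicator_of_notMem hmem, zero_add]
  have main := mild_of_representation a lam τ hτ y₀ ψ hψ hsupp y hy
  have mild : ∀ t : ℝ, 0 ≤ t → y t = Real.exp (-(lam * t)) * y₀ +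
      a * ∫ s in (0:ℝ)..t, Real.exp (-(lam * (t - s))) * y (s - τ) := fun t ht => by
    rw [hpos' t ht, (main t ht).2]
  refine ⟨?_, by simpa using mild 0 le_rfl, mild⟩
  have hexp : ∀ t s : ℝ, Real.exp (-(lam * (t - s))) * y (s - τ)
      = Real.exp (-(lam * t)) * (Real.exp (lam * s) * y (s - τ)) := by
    intro t s
    rw [← mul_assoc, ← Real.exp_add]
    ring_nf
  have hint : ∀ t : ℝ, 0 ≤ t →
      IntervalIntegrable (fun s => Real.exp (lam * s) * y (s - τ)) volume 0 t := by
    intro t ht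
    refine ((main t ht).1.const_mul (Real.exp (lam * t))).congr fun s _ => ?_
    rw [hexp, ← mul_assoc, ← Real.exp_add]
    simp
  -- factoring out `e^{-λt}` leaves a primitive of a fixed locally integrable function
  have hform : Set.EqOn y (fun t => Real.exp (-(lam * t)) * y₀ + a * (Real.exp (-(lam * t)) *
      ∫ s in (0:ℝ)..t, Real.exp (lam * s) * y (s - τ))) (Set.Ici 0) := by
    intro t ht
    rw [mild t ht]
    simp only [hexp t, intervalIntegral.integral_const_mul]
  refine ContinuousOn.congr ?_ hform
  have hprim : ContinuousOn (fun t => ∫ s in (0:ℝ)..t, Real.exp (lam * s) * y (s - τ))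
      (Set.Ici 0) := by
    intro t ht
    have ht0 : (0:ℝ) ≤ t := ht
    have h1 := intervalIntegral.continuousOn_primitive_interval' (hint (t + 1) (by linarith))
      Set.left_mem_uIcc
    rw [Set.uIcc_of_le (by linarith)] at h1
    refine (h1 t ⟨ht0, by linarith⟩).mono_of_mem_nhdsWithin ?_
    rw [← Set.Ici_inter_Iic]
    exact inter_mem_nhdsWithin _ (Iic_mem_nhds (by linarith))
  fun_prop
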